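/- For every natural number n ≥ 1, the total number of pairs (τ, s), where τ is a labeled tree on {1, ..., n} and s is a valid span of τ, equals (n+1)^(n-1). -/

import Mathlib

/-!
# Labeled trees with a valid span

Two consecutive arcs of a chain that changes direction share an endpoint, so one of them covers the
other. Hence a chain without covered arcs is monotone, and `(u, v)` is a valid span of a tree exactly
when the path from `u` to `v` in the tree is increasing.

Root the tree at `u` and record the parent of each vertex; the span condition says that the parents
of `v` form a decreasing sequence `v > … > u` (`isValidSpan_parentGraph_iff`). Deleting the edges of
this path turns the rooted tree into a rooted forest whose roots are the vertices of the path.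
Conversely the roots of any rooted forest on `Fin n` are linked into an increasing path in exactly
one way (`linkRoots`), and the ends of this path are the least and the greatest root. This is a
bijection between the pairs to be counted and the rooted forests on `n` vertices
(`spanOfForest_bijective`), that is, the trees on `n + 1` vertices.

Rooted forests are counted in `card_acyclicMap`: the acyclic maps `W → W ⊕ R` with `|W| = n ≥ 1` and
`|R| = r` number `r (n + r) ^ (n - 1)`. If `S` is the set of vertices sent to `R`, the map is a
function `S → R` together with an acyclic map `W \ S → (W \ S) ⊕ S`; by induction the total is
`∑_S r ^ |S| * |S| * n ^ (n - |S| - 1)`, with exponent `-1` at `S = W`,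
which the binomial theorem evaluates.
-/

/-- The lower endpoint of the `i`-th arc of the chain `w`. -/
def arcMin {n k : ℕ} (w : Fin (k + 1) → Fin n) (i : Fin k) : Fin n :=
  min (w i.castSucc) (w i.succ)

/-- The upper endpoint of the `i`-th arc of the chain `w`. -/
def arcMax {n k : ℕ} (w : Fin (k + 1) → Fin n) (i : Fin k) : Fin n :=
  max (w i.castSucc) (w i.succ)

/-- `w` is a chain of (undirected) arcs of `τ` witnessing that `[u, v]` is a valid span:
it is a path in `τ` from `u` to `v`, all its vertices lie in `[u, v]`, its arcs cover
`[u, v]`, and no arc is covered by another. -/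
def IsValidChain {n : ℕ} (τ : SimpleGraph (Fin n)) (u v : Fin n) {k : ℕ}
    (w : Fin (k + 1) → Fin n) : Prop :=
  Function.Injective w ∧ w 0 = u ∧ w (Fin.last k) = v ∧
  (∀ i : Fin k, τ.Adj (w i.castSucc) (w i.succ)) ∧
  (∀ i : Fin (k + 1), u ≤ w i ∧ w i ≤ v) ∧
  (∀ x : Fin n, u ≤ x → x ≤ v → x = u ∨ x = v ∨
      ∃ i : Fin k, arcMin w i ≤ x ∧ x ≤ arcMax w i) ∧
  (∀ i j : Fin k, i ≠ j → ¬ (arcMin w j ≤ arcMin w i ∧ arcMax w i ≤ arcMax w j))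

/-- `(u, v)` is a valid span of `τ`: either a single word (`u = v`, chain of length 0),
or a word sequence covered by a chain of non-nested arcs of `τ`. -/
def IsValidSpan {n : ℕ} (τ : SimpleGraph (Fin n)) (u v : Fin n) : Prop :=
  u ≤ v ∧ ∃ (k : ℕ) (w : Fin (k + 1) → Fin n), IsValidChain τ u v w

/-! ### Counting acyclic maps -/

/-- Rooted forests on `W` hung from a set `R` of roots: `f w` is the parent of `w`. Acyclicity is
expressed by a rank function decreasing along parents. -/
def AcyclicMap (W R : Type) : Type :=
  {f : W → W ⊕ R // ∃ ρ : W → ℕ, ∀ a b, f b = Sum.inl a → ρ a < ρ b}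

/-- Assembles a forest from the set `S` of vertices hanging directly from `R`, the way `S` is
attached to `R`, and the forest hanging from `S`. -/
noncomputable def glue (W R : Type) [DecidableEq W]
    (x : Σ S : Finset W, (S → R) × AcyclicMap {w // w ∉ S} S) : AcyclicMap W R :=
  ⟨fun w => if hw : w ∈ x.1 then Sum.inr (x.2.1 ⟨w, hw⟩)
      else Sum.inl (Sum.elim Subtype.val Subtype.val (x.2.2.1 ⟨w, hw⟩)), by
    obtain ⟨S, h, k, ρ, hρ⟩ := x
    refine ⟨fun w => if hw : w ∈ S then 0 else ρ ⟨w, hw⟩ + 1, fun a b hab => ?_⟩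
    by_cases hb : b ∈ S
    · simp [hb] at hab
    · simp only [hb, dite_false, Sum.inl.injEq] at hab ⊢
      rcases hk : k ⟨b, hb⟩ with y | s
      · have := hρ y ⟨b, hb⟩ hk
        rw [hk] at hab
        simp only [Sum.elim_inl] at hab
        subst hab
        simpa [y.2] using this
      · rw [hk] at hab
        simp only [Sum.elim_inr] at hab
        subst hab
        simp [s.2]⟩

lemma sumElim_val_injective {W : Type} (S : Finset W) :
    Function.Injective (Sum.elim Subtype.val Subtype.val : {w // w ∉ S} ⊕ S → W) := by
  rintro (a | a) (b | b) h
  · exact congrArg Sum.inl (Subtype.ext h)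
  · simp only [Sum.elim_inl, Sum.elim_inr] at h
    exact absurd (h ▸ b.2) a.2
  · simp only [Sum.elim_inl, Sum.elim_inr] at h
    exact absurd (h ▸ a.2) b.2
  · exact congrArg Sum.inr (Subtype.ext h)

lemma glue_bijective (W R : Type) [Fintype W] [DecidableEq W] :
    Function.Bijective (glue W R) := by
  classical
  constructor
  · rintro ⟨S, h, k⟩ ⟨S', h', k'⟩ e
    have e' : ∀ w, (glue W R ⟨S, h, k⟩).1 w = (glue W R ⟨S', h', k'⟩).1 w := fun w => by rw [e]
    simp only [glue] at e'
    have hS : S = S' := by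
      ext w
      have := e' w
      by_cases h1 : w ∈ S <;> by_cases h2 : w ∈ S' <;> simp_all
    subst hS
    have hh : h = h' := by
      funext ⟨w, hw⟩
      simpa [hw] using e' w
    have hk : k = k' := by
      apply Subtype.ext
      funext ⟨w, hw⟩
      have := e' w
      simp only [hw, dite_false, Sum.inl.injEq] at this
      exact sumElim_val_injective S this
    rw [hh, hk]
  · rintro ⟨f, ρ, hρ⟩
    let S : Finset W := Finset.univ.filter fun w => ∃ r, f w = Sum.inr r
    have h1 : ∀ w : S, ∃ r, f w = Sum.inr r := fun w => (Finset.mem_filter.1 w.2).2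
    have h2 : ∀ w : {w // w ∉ S}, ∃ y : {w // w ∉ S} ⊕ S,
        f w = Sum.inl (Sum.elim Subtype.val Subtype.val y) := by
      rintro ⟨w, hw⟩
      rcases hf : f w with y | r
      · by_cases hy : y ∈ S
        · exact ⟨Sum.inr ⟨y, hy⟩, by simp⟩
        · exact ⟨Sum.inl ⟨y, hy⟩, by simp⟩
      · exact absurd (Finset.mem_filter.2 ⟨Finset.mem_univ _, r, hf⟩) hw
    choose h hh using h1
    choose k hk using h2
    refine ⟨⟨S, h, k, fun w => ρ w, fun a b hab => ?_⟩, ?_⟩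
    · apply hρ
      rw [hk, hab]
      rfl
    · apply Subtype.ext
      funext w
      simp only [glue]
      by_cases hw : w ∈ S
      · simp only [hw, dite_true]
        exact (hh ⟨w, hw⟩).symm
      · simp only [hw, dite_false]
        exact (hk ⟨w, hw⟩).symm

instance (W R : Type) [Finite W] [Finite R] : Finite (AcyclicMap W R) := by
  unfold AcyclicMap
  infer_instance

/-- Without roots there is no forest on a nonempty vertex set: a vertex of least rank would have no
parent. -/
lemma isEmpty_acyclicMap (W R : Type) [Nonempty W] [IsEmpty R] : IsEmpty (AcyclicMap W R) := by
  refine ⟨fun ⟨f, ρ, hρ⟩ => ?_⟩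
  obtain ⟨w, hw⟩ := exists_minimal_of_wellFoundedLT (fun m => ∃ w, ρ w = m)
    ⟨_, Classical.arbitrary W, rfl⟩
  obtain ⟨⟨w', rfl⟩, hmin⟩ := hw
  rcases hf : f w' with y | r
  · have h1 := hρ _ _ hf
    have h2 := hmin ⟨y, rfl⟩ h1.le
    omega
  · exact isEmptyElim r

/-- The derivative of the binomial theorem, as a sum over subsets. -/
lemma sum_card_mul_pow (W : Type) [Fintype W] (m r N : ℕ) (hW : Fintype.card W = m + 1) :
    ∑ S : Finset W, r ^ S.card * (S.card * N ^ (m + 1 - S.card))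
      = (m + 1) * (r * (N + r) ^ m) := by
  rw [← Finset.powerset_univ,
    Finset.sum_powerset_apply_card (fun s => r ^ s * (s * N ^ (m + 1 - s)))]
  rw [Finset.card_univ, hW, Finset.sum_range_succ']
  simp only [zero_mul, mul_zero, add_zero, smul_eq_mul]
  rw [add_comm N r, add_pow, Finset.mul_sum, Finset.mul_sum]
  refine Finset.sum_congr rfl fun s _ => ?_
  have := Nat.add_one_mul_choose_eq m s
  rw [Nat.add_sub_add_right]
  calc (m + 1).choose (s + 1) * (r ^ (s + 1) * ((s + 1) * N ^ (m - s)))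
      = ((m + 1).choose (s + 1) * (s + 1)) * (r ^ (s + 1) * N ^ (m - s)) := by ring
    _ = _ := by rw [← this]; simp only [Nat.cast_id]; ring

/-- There are `r (n + r) ^ (n - 1)` forests on `n` vertices hanging from `r` roots; multiplying by
`n + r` avoids the exponent `n - 1`. -/
lemma card_acyclicMap (n : ℕ) : ∀ (W R : Type) [Fintype W] [Fintype R], Fintype.card W = n →
    Nat.card (AcyclicMap W R) * (n + Fintype.card R)
      = Fintype.card R * (n + Fintype.card R) ^ n := by
  classical
  induction n using Nat.strong_induction_on with
  | _ n ih =>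
  intro W R _ _ hW
  rcases n with _ | m
  · have : IsEmpty W := Fintype.card_eq_zero_iff.1 hW
    have : Nat.card (AcyclicMap W R) = 1 := by
      rw [Nat.card_eq_one_iff_unique]
      refine ⟨⟨fun a b => Subtype.ext (funext fun w => isEmptyElim w)⟩,
        ⟨⟨fun w => isEmptyElim w, fun w => isEmptyElim w, fun w => isEmptyElim w⟩⟩⟩
    simp [this]
  · have hne : Nonempty W := Fintype.card_pos_iff.1 (by omega)
    set r := Fintype.card R with hr
    have key : Nat.card (AcyclicMap W R) * (m + 1) = (m + 1) * (r * (m + 1 + r) ^ m) := by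
      rw [← Nat.card_congr (Equiv.ofBijective _ (glue_bijective W R)), Nat.card_sigma,
        ← sum_card_mul_pow W m r (m + 1) hW, Finset.sum_mul]
      refine Finset.sum_congr rfl fun S _ => ?_
      rw [Nat.card_prod, Nat.card_fun, Nat.card_eq_fintype_card, Nat.card_eq_fintype_card,
        Fintype.card_coe, ← hr, mul_assoc]
      congr 1
      rcases S.eq_empty_or_nonempty with rfl | hS
      · have : Nonempty {w : W // w ∉ (∅ : Finset W)} := ⟨⟨Classical.arbitrary W, by simp⟩⟩
        have := isEmpty_acyclicMap {w : W // w ∉ (∅ : Finset W)} (∅ : Finset W)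
        rw [Nat.card_of_isEmpty, Finset.card_empty, zero_mul, zero_mul]
      · have hc : S.card ≤ m + 1 := hW ▸ S.card_le_univ
        have hp := hS.card_pos
        have hcard : Fintype.card {w // w ∉ S} = m + 1 - S.card := by
          rw [Fintype.card_subtype_compl, hW, Fintype.card_coe]
        have := ih (m + 1 - S.card) (by omega) {w // w ∉ S} S hcard
        rw [Fintype.card_coe, Nat.sub_add_cancel hc] at this
        exact this
    have key' : Nat.card (AcyclicMap W R) = r * (m + 1 + r) ^ m := by
      rw [mul_comm] at key
      exact Nat.eq_of_mul_eq_mul_left (Nat.succ_pos m) key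
    rw [key']
    ring

/-! ### Parent functions and their trees -/

/-- `g` is the parent function of a rooted forest on `Fin n`, with value `⊥` at the roots. -/
def IsForest {n : ℕ} (g : Fin n → WithBot (Fin n)) : Prop :=
  ∃ ρ : Fin n → ℕ, ∀ a b : Fin n, g b = a → ρ a < ρ b

lemma card_isForest (n : ℕ) (hn : 1 ≤ n) :
    Nat.card {g : Fin n → WithBot (Fin n) // IsForest g} = (n + 1) ^ (n - 1) := by
  have e : {g : Fin n → WithBot (Fin n) // IsForest g} ≃ AcyclicMap (Fin n) PUnit.{1} := by
    refine Equiv.subtypeEquiv ((Equiv.refl _).arrowCongr (Equiv.optionEquivSumPUnit.{0} (Fin n))) ?_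
    intro g
    refine exists_congr fun ρ => forall_congr' fun a => forall_congr' fun b => ?_
    refine imp_congr ?_ Iff.rfl
    exact eq_comm.trans (((Equiv.optionEquivSumPUnit.{0} (Fin n)).eq_symm_apply
      (x := Sum.inl a) (y := g b)).symm.trans eq_comm).symm
  rw [Nat.card_congr e]
  have := card_acyclicMap n (Fin n) PUnit.{1} (by simp)
  obtain ⟨m, rfl⟩ : ∃ m, n = m + 1 := ⟨n - 1, by omega⟩
  simp only [Fintype.card_unique, one_mul, pow_succ] at this
  exact Nat.eq_of_mul_eq_mul_right (by omega) this

/-- The undirected graph joining every non-root to its parent. -/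
def parentGraph {n : ℕ} (g : Fin n → WithBot (Fin n)) : SimpleGraph (Fin n) :=
  SimpleGraph.fromRel fun x y => g x = y

lemma IsForest.adj_iff {n : ℕ} {g : Fin n → WithBot (Fin n)} (hg : IsForest g) {x y : Fin n} :
    (parentGraph g).Adj x y ↔ g x = y ∨ g y = x := by
  obtain ⟨ρ, hρ⟩ := hg
  rw [parentGraph, SimpleGraph.fromRel_adj, and_iff_right_iff_imp]
  rintro (h | h) rfl
  · exact lt_irrefl _ (hρ _ _ h)
  · exact lt_irrefl _ (hρ _ _ h)

lemma IsForest.isTree {n : ℕ} {g : Fin n → WithBot (Fin n)} (hg : IsForest g) {u : Fin n}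
    (hu : ∀ x, g x = ⊥ ↔ x = u) : (parentGraph g).IsTree := by
  classical
  have hreach : ∀ x, (parentGraph g).Reachable x u := by
    obtain ⟨ρ, hρ⟩ := id hg
    intro x
    induction hx : ρ x using Nat.strong_induction_on generalizing x with
    | _ m ih =>
    rcases hgx : g x with _ | y
    · rw [(hu x).1 hgx]
    · have hxy : g x = (y : WithBot (Fin n)) := hgx
      exact (hg.adj_iff.2 (Or.inl hxy)).reachable.trans (ih _ (hx ▸ hρ _ _ hxy) y rfl)
  have hconn : (parentGraph g).Connected :=
    { preconnected := fun x y => (hreach x).trans (hreach y).symm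
      nonempty := ⟨u⟩ }
  rw [SimpleGraph.isTree_iff_connected_and_card]
  refine ⟨hconn, le_antisymm ?_ hconn.card_vert_le_card_edgeSet_add_one⟩
  -- Every edge joins some `x ≠ u` to its parent, so there are at most `n - 1` edges.
  have hsub : (parentGraph g).edgeSet ⊆
      (fun x => s(x, (g x).unbotD u)) '' ((Finset.univ.erase u : Finset (Fin n)) : Set (Fin n)) := by
    intro e
    induction e with
    | _ x y =>
    rw [SimpleGraph.mem_edgeSet, hg.adj_iff]
    have hne : ∀ a b : Fin n, g a = b → a ≠ u := by
      rintro a b h rfl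
      rw [(hu a).2 rfl] at h
      exact WithBot.bot_ne_coe h
    rintro (h | h)
    · exact ⟨x, by simp [hne _ _ h], by simp [h]⟩
    · exact ⟨y, by simp [hne _ _ h], by simp [h, Sym2.eq_swap]⟩
  have h1 := (Set.ncard_le_ncard hsub (Set.toFinite _)).trans (Set.ncard_image_le (Set.toFinite _))
  rw [Set.ncard_coe_finset, Finset.card_erase_of_mem (Finset.mem_univ _), Finset.card_univ,
    Fintype.card_fin] at h1
  have h2 : 0 < n := u.pos
  rw [Nat.card_eq_fintype_card (α := Fin n), Fintype.card_fin, Nat.card_coe_set_eq]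
  omega

/-- A tree and its root determine the parent function. -/
lemma IsForest.eq_of_parentGraph_eq {n : ℕ} {g h : Fin n → WithBot (Fin n)} (hg : IsForest g)
    (hh : IsForest h) (hroot : ∀ x, h x = ⊥ → g x = ⊥) (e : parentGraph g = parentGraph h) :
    g = h := by
  obtain ⟨ρ, hρ⟩ := id hh
  funext x
  induction hx : ρ x using Nat.strong_induction_on generalizing x with
  | _ m ih =>
  rcases hhx : h x with _ | y
  · exact hroot x hhx
  · have hxy : h x = (y : WithBot (Fin n)) := hhx
    have hlt := hρ _ _ hxy
    have hadj : (parentGraph g).Adj x y := e ▸ hh.adj_iff.2 (Or.inl hxy)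
    rcases hg.adj_iff.1 hadj with h1 | h1
    · exact h1
    · -- Otherwise `x` would be the parent of `y` in both forests.
      have h2 := ih _ (hx ▸ hlt) y rfl
      have := hρ _ _ (h2.symm.trans h1)
      omega

/-- Every tree comes from the parent function pointing towards a prescribed root. -/
lemma exists_parentGraph_eq {n : ℕ} {G : SimpleGraph (Fin n)} (hG : G.IsTree) (u : Fin n) :
    ∃ g, IsForest g ∧ (∀ x, g x = ⊥ ↔ x = u) ∧ parentGraph g = G := by
  classical
  have hconn := hG.1
  have hnext : ∀ x, x ≠ u → ∃ y, G.Adj x y ∧ G.dist y u < G.dist x u := by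
    intro x hx
    obtain ⟨p, hp⟩ := hconn.exists_walk_length_eq_dist x u
    cases p with
    | nil => exact absurd rfl hx
    | cons h q =>
      refine ⟨_, h, ?_⟩
      have := SimpleGraph.dist_le q
      rw [SimpleGraph.Walk.length_cons] at hp
      omega
  choose! c hc using hnext
  let g : Fin n → WithBot (Fin n) := fun x => if x = u then ⊥ else (c x : Fin n)
  have hgu : ∀ x, g x = ⊥ ↔ x = u := by
    intro x
    by_cases hx : x = u <;> simp [g, hx]
  have hgc : ∀ x y : Fin n, g x = y → G.Adj x y ∧ G.dist y u < G.dist x u := by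
    intro x y h
    by_cases hx : x = u
    · simp [g, hx] at h
    · simp only [g, hx, if_false, WithBot.coe_inj] at h
      exact h ▸ hc x hx
  have hg : IsForest g := ⟨fun x => G.dist x u, fun a b h => (hgc b a h).2⟩
  refine ⟨g, hg, hgu, ?_⟩
  have hle : parentGraph g ≤ G := by
    intro x y h
    rcases hg.adj_iff.1 h with h | h
    · exact (hgc _ _ h).1
    · exact (hgc _ _ h).1.symm
  -- Both graphs are trees on the same vertices, so they have the same number of edges.
  have h1 := (SimpleGraph.isTree_iff_connected_and_card.1 (hg.isTree hgu)).2
  have h2 := (SimpleGraph.isTree_iff_connected_and_card.1 hG).2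
  rw [Nat.card_coe_set_eq] at h1 h2
  exact SimpleGraph.edgeSet_injective (Set.eq_of_subset_of_ncard_le
    (SimpleGraph.edgeSet_mono hle) (by omega) (Set.toFinite _))

/-! ### Valid spans are increasing paths -/

lemma IsValidChain.lt_succ {n : ℕ} {τ : SimpleGraph (Fin n)} {u v : Fin n} {k : ℕ}
    {w : Fin (k + 1) → Fin n} (h : IsValidChain τ u v w) (i : Fin k) :
    w i.castSucc < w i.succ := by
  obtain ⟨hinj, h0, -, -, hbd, -, hnest⟩ := h
  obtain ⟨i, hi⟩ := i
  induction i with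
  | zero =>
    refine lt_of_le_of_ne ?_ (hinj.ne (by simp [Fin.ext_iff]))
    have : (Fin.castSucc ⟨0, hi⟩ : Fin (k + 1)) = 0 := rfl
    rw [this, h0]
    exact (hbd _).1
  | succ i ih =>
    have ih := ih (by omega)
    have e : (Fin.castSucc ⟨i + 1, hi⟩ : Fin (k + 1)) = Fin.succ ⟨i, by omega⟩ := rfl
    by_contra hlt
    rw [not_lt] at hlt
    -- At a turning point the two arcs share their upper end, so one covers the other.
    have a1 : arcMin w ⟨i, by omega⟩ = w (Fin.castSucc ⟨i, by omega⟩) := min_eq_left ih.le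
    have a2 : arcMax w ⟨i, by omega⟩ = w (Fin.succ ⟨i, by omega⟩) := max_eq_right ih.le
    have a3 : arcMin w ⟨i + 1, hi⟩ = w (Fin.succ ⟨i + 1, hi⟩) := min_eq_right hlt
    have a4 : arcMax w ⟨i + 1, hi⟩ = w (Fin.succ ⟨i, by omega⟩) := max_eq_left hlt
    rcases le_total (w (Fin.castSucc ⟨i, by omega⟩)) (w (Fin.succ ⟨i + 1, hi⟩)) with hle | hle
    · exact hnest ⟨i + 1, hi⟩ ⟨i, by omega⟩ (by simp) ⟨by rw [a1, a3]; exact hle,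
        by rw [a2, a4]⟩
    · exact hnest ⟨i, by omega⟩ ⟨i + 1, hi⟩ (by simp) ⟨by rw [a1, a3]; exact hle,
        by rw [a2, a4]⟩

lemma isValidChain_of_strictMono {n : ℕ} {τ : SimpleGraph (Fin n)} {k : ℕ}
    {w : Fin (k + 1) → Fin n} (hw : StrictMono w)
    (hadj : ∀ i : Fin k, τ.Adj (w i.castSucc) (w i.succ)) :
    IsValidChain τ (w 0) (w (Fin.last k)) w := by
  have hmin : ∀ i : Fin k, arcMin w i = w i.castSucc := fun i =>
    min_eq_left (hw i.castSucc_lt_succ).le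
  have hmax : ∀ i : Fin k, arcMax w i = w i.succ := fun i =>
    max_eq_right (hw i.castSucc_lt_succ).le
  refine ⟨hw.injective, rfl, rfl, hadj, fun i => ⟨hw.monotone (Fin.zero_le i),
    hw.monotone (Fin.le_last i)⟩, ?_, ?_⟩
  · intro x hx hxv
    have hcov : ∀ j : Fin (k + 1), x ≤ w j →
        x = w 0 ∨ ∃ i : Fin k, arcMin w i ≤ x ∧ x ≤ arcMax w i := by
      intro j
      induction j using Fin.induction with
      | zero => exact fun h => Or.inl (le_antisymm h hx)
      | succ j ih =>
        intro h
        rcases le_total x (w j.castSucc) with h' | h'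
        · exact ih h'
        · exact Or.inr ⟨j, by rw [hmin]; exact h', by rw [hmax]; exact h⟩
    rcases hcov _ hxv with h | h
    · exact Or.inl h
    · exact Or.inr (Or.inr h)
  · rintro i j hij ⟨h1, h2⟩
    rw [hmin, hmin, hw.le_iff_le] at h1
    rw [hmax, hmax, hw.le_iff_le] at h2
    exact hij (le_antisymm (Fin.succ_le_succ_iff.1 h2) (Fin.castSucc_le_castSucc_iff.1 h1))

/-- The successive ancestors `v, g v, g (g v), …` decrease until they reach a root. -/
inductive Descends {n : ℕ} (g : Fin n → WithBot (Fin n)) : Fin n → Prop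
  | root (v : Fin n) : g v = ⊥ → Descends g v
  | step (v y : Fin n) : g v = y → y < v → Descends g y → Descends g v

lemma Descends.exists_chain {n : ℕ} {g : Fin n → WithBot (Fin n)} (hg : IsForest g) {u v : Fin n}
    (hu : ∀ x, g x = ⊥ ↔ x = u) (h : Descends g v) :
    ∃ (k : ℕ) (w : Fin (k + 1) → Fin n), StrictMono w ∧ w 0 = u ∧ w (Fin.last k) = v ∧
      ∀ i : Fin k, (parentGraph g).Adj (w i.castSucc) (w i.succ) := by
  induction h with
  | root v hv =>
    refine ⟨0, fun _ => v, ?_, (hu v).1 hv, rfl, fun i => i.elim0⟩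
    intro i j hij
    omega
  | step v y hvy hlt _ ih =>
    obtain ⟨k, w, hw, h0, hl, hadj⟩ := ih
    have hw' : ∀ i : Fin (k + 1), (Fin.snoc w v : Fin (k + 2) → Fin n) i.castSucc = w i :=
      fun i => Fin.snoc_castSucc (α := fun _ => Fin n) v w i
    have hv' : (Fin.snoc w v : Fin (k + 2) → Fin n) (Fin.last (k + 1)) = v :=
      Fin.snoc_last (α := fun _ => Fin n) v w
    refine ⟨k + 1, (Fin.snoc w v : Fin (k + 2) → Fin n), ?_, ?_, hv', ?_⟩
    · rw [Fin.strictMono_iff_lt_succ]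
      intro i
      rw [hw']
      refine Fin.lastCases ?_ (fun i => ?_) i
      · rw [Fin.succ_last, hv', hl]
        exact hlt
      · rw [Fin.succ_castSucc, hw']
        exact hw i.castSucc_lt_succ
    · rw [← Fin.castSucc_zero, hw', h0]
    · intro i
      rw [hw']
      refine Fin.lastCases ?_ (fun i => ?_) i
      · rw [Fin.succ_last, hv', hl]
        exact hg.adj_iff.2 (Or.inr hvy)
      · rw [Fin.succ_castSucc, hw']
        exact hadj i

lemma isValidSpan_parentGraph_iff {n : ℕ} {g : Fin n → WithBot (Fin n)} (hg : IsForest g)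
    {u v : Fin n} (hu : ∀ x, g x = ⊥ ↔ x = u) :
    IsValidSpan (parentGraph g) u v ↔ Descends g v := by
  constructor
  · rintro ⟨-, k, w, hw⟩
    have hlt := hw.lt_succ
    obtain ⟨hinj, h0, hl, hadj, -⟩ := hw
    -- A chain leaving the root can only move from a vertex to one of its children.
    have hpar : ∀ i (hi : i < k),
        g (w (Fin.succ ⟨i, hi⟩)) = (w (Fin.castSucc ⟨i, hi⟩) : Fin n) := by
      intro i
      induction i with
      | zero =>
        intro hi
        rcases hg.adj_iff.1 (hadj ⟨0, hi⟩) with h | h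
        · have e : (Fin.castSucc ⟨0, hi⟩ : Fin (k + 1)) = 0 := rfl
          rw [e, h0, (hu u).2 rfl] at h
          exact absurd h WithBot.bot_ne_coe
        · exact h
      | succ i ih =>
        intro hi
        rcases hg.adj_iff.1 (hadj ⟨i + 1, hi⟩) with h | h
        · have e := (ih (by omega)).symm.trans h
          have := hinj (WithBot.coe_inj.1 e)
          simp [Fin.ext_iff] at this
          omega
        · exact h
    have hdesc : ∀ j : Fin (k + 1), Descends g (w j) := by
      intro j
      induction j using Fin.induction with
      | zero => exact .root _ ((hu _).2 h0)
      | succ j ih => exact .step _ _ (hpar j j.2) (hlt j) ih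
    exact hl ▸ hdesc _
  · intro h
    obtain ⟨k, w, hw, rfl, rfl, hadj⟩ := h.exists_chain hg hu
    exact ⟨hw.monotone (Fin.zero_le _), k, w, isValidChain_of_strictMono hw hadj⟩

/-! ### Linking the roots of a forest -/

/-- Makes the next smaller root the parent of each root of `f` but the least one. -/
def linkRoots {n : ℕ} (f : Fin n → WithBot (Fin n)) (x : Fin n) : WithBot (Fin n) :=
  if f x = ⊥ then (Finset.univ.filter fun r => f r = ⊥ ∧ r < x).max else f x

/-- `x` is an ancestor of `v`, or `v` itself. -/
def IsAncestor {n : ℕ} (g : Fin n → WithBot (Fin n)) (v x : Fin n) : Prop :=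
  Relation.ReflTransGen (fun a b : Fin n => g a = b) v x

section linkRoots

variable {n : ℕ} {f : Fin n → WithBot (Fin n)}

lemma linkRoots_of_root {x y : Fin n} (hx : f x = ⊥) (h : linkRoots f x = y) :
    f y = ⊥ ∧ y < x ∧ ∀ r, f r = ⊥ → r < x → r ≤ y := by
  rw [linkRoots, if_pos hx] at h
  have h1 := Finset.mem_of_max h
  rw [Finset.mem_filter] at h1
  exact ⟨h1.2.1, h1.2.2, fun r hr hrx => Finset.le_max_of_eq
    (Finset.mem_filter.2 ⟨Finset.mem_univ _, hr, hrx⟩) h⟩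

lemma linkRoots_eq_bot {x : Fin n} :
    linkRoots f x = ⊥ ↔ f x = ⊥ ∧ ∀ r, f r = ⊥ → x ≤ r := by
  unfold linkRoots
  split_ifs with hx
  · rw [Finset.max_eq_bot, Finset.filter_eq_empty_iff]
    simp [hx]
  · simp [hx]

lemma IsForest.link (hf : IsForest f) : IsForest (linkRoots f) := by
  classical
  obtain ⟨ρ, hρ⟩ := hf
  -- The roots are ranked by their position and below all other vertices.
  refine ⟨fun x => if f x = ⊥ then x.val else n + ρ x, fun a b h => ?_⟩
  by_cases hb : f b = ⊥
  · obtain ⟨ha, hab, -⟩ := linkRoots_of_root hb h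
    simpa [ha, hb] using hab
  · have h' : f b = a := by rwa [linkRoots, if_neg hb] at h
    have h1 := hρ _ _ h'
    simp only [hb, if_false]
    split_ifs
    · have := a.2
      omega
    · omega

/-- The path that links the roots of `f` consists of all of them. -/
lemma isAncestor_linkRoots_iff {v : Fin n} (hv : f v = ⊥) (hmax : ∀ r, f r = ⊥ → r ≤ v)
    (x : Fin n) : IsAncestor (linkRoots f) v x ↔ f x = ⊥ := by
  constructor
  · intro h
    induction h with
    | refl => exact hv
    | tail _ hbc ih => exact (linkRoots_of_root ih hbc).1
  · have key : ∀ r : Fin n, f r = ⊥ → f x = ⊥ → x ≤ r → IsAncestor (linkRoots f) r x := by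
      intro r
      induction r using WellFoundedLT.induction with
      | _ r ih =>
      intro hr hx hxr
      rcases hxr.eq_or_lt with rfl | hlt
      · exact .refl
      · rcases hg : linkRoots f r with _ | y
        · exact absurd ((linkRoots_eq_bot.1 hg).2 x hx) (not_le.2 hlt)
        · have hg' : linkRoots f r = (y : WithBot (Fin n)) := hg
          obtain ⟨hy, hyr, hle⟩ := linkRoots_of_root hr hg'
          exact .head hg' (ih y hyr hy hx (hle x hx hlt))
    exact fun hx => key v hv hx (hmax x hx)

lemma descends_linkRoots (v : Fin n) (hv : f v = ⊥) : Descends (linkRoots f) v := by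
  induction v using WellFoundedLT.induction with
  | _ v ih =>
  rcases hg : linkRoots f v with _ | y
  · exact .root _ hg
  · obtain ⟨hy, hyv, -⟩ := linkRoots_of_root hv hg
    exact .step _ _ hg hyv (ih y hyv hy)

end linkRoots

lemma Descends.of_isAncestor {n : ℕ} {g : Fin n → WithBot (Fin n)} {v x : Fin n}
    (h : Descends g v) (hx : IsAncestor g v x) : Descends g x ∧ x ≤ v := by
  induction hx with
  | refl => exact ⟨h, le_rfl⟩
  | tail _ hbc ih =>
    obtain ⟨h1, h2⟩ := ih
    cases h1 with
    | root _ hb => exact absurd (hb.symm.trans hbc) WithBot.bot_ne_coe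
    | step _ y hy hlt hd =>
      obtain rfl := WithBot.coe_inj.1 (hy.symm.trans hbc)
      exact ⟨hd, hlt.le.trans h2⟩

lemma Descends.isAncestor_root {n : ℕ} {g : Fin n → WithBot (Fin n)} {u v : Fin n}
    (hu : ∀ x, g x = ⊥ ↔ x = u) (h : Descends g v) : IsAncestor g v u := by
  induction h with
  | root v hv => rw [(hu v).1 hv]; exact .refl
  | step v y hy _ _ ih => exact .head hy ih

/-- A rooted tree with a descending path from `v` to the root `u` arises by linking the roots of the
forest obtained by deleting the edges of this path. -/
lemma exists_linkRoots_eq {n : ℕ} {g : Fin n → WithBot (Fin n)} (hg : IsForest g) {u v : Fin n}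
    (hu : ∀ x, g x = ⊥ ↔ x = u) (hv : Descends g v) :
    ∃ f, IsForest f ∧ linkRoots f = g ∧ f v = ⊥ ∧ ∀ r, f r = ⊥ → r ≤ v := by
  classical
  let f : Fin n → WithBot (Fin n) := fun x => if IsAncestor g v x then ⊥ else g x
  have hf : ∀ x, f x = ⊥ ↔ IsAncestor g v x := by
    intro x
    by_cases hx : IsAncestor g v x
    · simp [f, hx]
    · simp only [f, hx, if_false, iff_false]
      rw [hu]
      rintro rfl
      exact hx (hv.isAncestor_root hu)
  refine ⟨f, ?_, ?_, (hf v).2 .refl, fun r hr => (hv.of_isAncestor ((hf r).1 hr)).2⟩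
  · obtain ⟨ρ, hρ⟩ := hg
    refine ⟨ρ, fun a b h => hρ a b ?_⟩
    by_cases hb : IsAncestor g v b
    · simp [f, hb] at h
    · simpa [f, hb] using h
  · funext x
    by_cases hx : IsAncestor g v x
    · rw [linkRoots, if_pos ((hf x).2 hx)]
      cases (hv.of_isAncestor hx).1 with
      | root _ hb =>
        rw [hb, Finset.max_eq_bot, Finset.filter_eq_empty_iff]
        rintro r - ⟨hr, hlt⟩
        rw [(hu x).1 hb] at hlt
        have hd := (hv.of_isAncestor ((hf r).1 hr)).1
        exact absurd (hd.of_isAncestor (hd.isAncestor_root hu)).2 (not_le.2 hlt)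
      | step _ y hy hlt hd =>
        rw [hy]
        apply le_antisymm
        · refine Finset.max_le fun r hr => ?_
          obtain ⟨-, hr, hrx⟩ := Finset.mem_filter.1 hr
          rw [WithBot.coe_le_coe]
          have hr' := (hf r).1 hr
          have huniq : Relator.RightUnique (fun a b : Fin n => g a = b) := fun a b c h1 h2 =>
            WithBot.coe_inj.1 (h1.symm.trans h2)
          rcases Relation.ReflTransGen.total_of_right_unique huniq hx hr' with h | h
          · rcases h.cases_head with rfl | ⟨y', hy', h'⟩
            · exact absurd hrx (lt_irrefl _)
            · obtain rfl := huniq hy hy'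
              exact (hd.of_isAncestor h').2
          · exact absurd ((hv.of_isAncestor hr').1.of_isAncestor h).2 (not_le.2 hrx)
        · exact Finset.le_max (Finset.mem_filter.2 ⟨Finset.mem_univ _,
            (hf y).2 (hx.tail hy), hlt⟩)
    · rw [linkRoots, if_neg (mt (hf x).1 hx)]
      simp [f, hx]

/-! ### The bijection -/

lemma IsForest.exists_root {n : ℕ} (hn : 1 ≤ n) {f : Fin n → WithBot (Fin n)} (hf : IsForest f) :
    (Finset.univ.filter fun r => f r = ⊥).Nonempty := by
  obtain ⟨ρ, hρ⟩ := hf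
  obtain ⟨x, -, hx⟩ := Finset.exists_min_image Finset.univ ρ ⟨⟨0, hn⟩, Finset.mem_univ _⟩
  refine ⟨x, Finset.mem_filter.2 ⟨Finset.mem_univ _, ?_⟩⟩
  rcases hfx : f x with _ | y
  · rfl
  · exact absurd (hρ y x hfx) (not_lt.2 (hx y (Finset.mem_univ _)))

/-- The least and the greatest root of a forest. -/
lemma IsForest.exists_ends {n : ℕ} (hn : 1 ≤ n) {f : Fin n → WithBot (Fin n)} (hf : IsForest f) :
    ∃ p : Fin n × Fin n, (∀ x, linkRoots f x = ⊥ ↔ x = p.1) ∧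
      f p.2 = ⊥ ∧ ∀ r, f r = ⊥ → r ≤ p.2 := by
  have hne := hf.exists_root hn
  have hmem : ∀ {x}, x ∈ (Finset.univ.filter fun r => f r = ⊥) ↔ f x = ⊥ := by simp
  refine ⟨(Finset.min' _ hne, Finset.max' _ hne), fun x => ?_, hmem.1 (Finset.max'_mem _ hne),
    fun r hr => Finset.le_max' _ r (hmem.2 hr)⟩
  rw [linkRoots_eq_bot]
  constructor
  · rintro ⟨h1, h2⟩
    exact le_antisymm (h2 _ (hmem.1 (Finset.min'_mem _ hne))) (Finset.min'_le _ _ (hmem.2 h1))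
  · rintro rfl
    exact ⟨hmem.1 (Finset.min'_mem _ hne), fun r hr => Finset.min'_le _ _ (hmem.2 hr)⟩

/-- Sends a forest to the tree linking its roots into an increasing path, with the span between the
ends of that path. -/
noncomputable def spanOfForest {n : ℕ} (hn : 1 ≤ n)
    (f : {f : Fin n → WithBot (Fin n) // IsForest f}) :
    Σ τ : {G : SimpleGraph (Fin n) // G.IsTree}, {p : Fin n × Fin n // IsValidSpan τ.1 p.1 p.2} :=
  ⟨⟨parentGraph (linkRoots f.1), f.2.link.isTree (f.2.exists_ends hn).choose_spec.1⟩,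
    ⟨(f.2.exists_ends hn).choose,
      (isValidSpan_parentGraph_iff f.2.link (f.2.exists_ends hn).choose_spec.1).2
        (descends_linkRoots _ (f.2.exists_ends hn).choose_spec.2.1)⟩⟩

lemma sigma_tree_span_ext {n : ℕ} {a b : Σ τ : {G : SimpleGraph (Fin n) // G.IsTree},
    {p : Fin n × Fin n // IsValidSpan τ.1 p.1 p.2}} (h1 : a.1.1 = b.1.1) (h2 : a.2.1 = b.2.1) :
    a = b := by
  obtain ⟨⟨G, hG⟩, ⟨p, hp⟩⟩ := a
  obtain ⟨⟨G', hG'⟩, ⟨p', hp'⟩⟩ := b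
  obtain rfl : G = G' := h1
  obtain rfl : p = p' := h2
  rfl

lemma spanOfForest_bijective {n : ℕ} (hn : 1 ≤ n) : Function.Bijective (spanOfForest hn) := by
  constructor
  · rintro ⟨f, hf⟩ ⟨f', hf'⟩ e
    have e1 : parentGraph (linkRoots f) = parentGraph (linkRoots f') :=
      congrArg (fun z => z.1.1) e
    have e2 : (hf.exists_ends hn).choose = (hf'.exists_ends hn).choose :=
      congrArg (fun z => z.2.1) e
    obtain ⟨hu, hv, hmax⟩ := (hf.exists_ends hn).choose_spec
    obtain ⟨hu', hv', hmax'⟩ := (hf'.exists_ends hn).choose_spec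
    rw [← e2] at hu' hv' hmax'
    generalize (hf.exists_ends hn).choose = p at hu hv hmax hu' hv' hmax'
    have hlink := hf.link.eq_of_parentGraph_eq hf'.link
      (fun x hx => (hu x).2 ((hu' x).1 hx)) e1
    -- The roots of the forest are recovered as the vertices of the spanning path.
    have hroots : ∀ x, f x = ⊥ ↔ f' x = ⊥ := fun x => by
      rw [← isAncestor_linkRoots_iff hv hmax, ← isAncestor_linkRoots_iff hv' hmax', hlink]
    apply Subtype.ext
    funext x
    change f x = f' x
    by_cases hx : f x = ⊥
    · rw [hx, (hroots x).1 hx]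
    · have := congrFun hlink x
      rwa [linkRoots, linkRoots, if_neg hx, if_neg (mt (hroots x).2 hx)] at this
  · rintro ⟨⟨G, hG⟩, ⟨⟨u, v⟩, hp⟩⟩
    obtain ⟨g, hg, hu, rfl⟩ := exists_parentGraph_eq hG u
    obtain ⟨f, hf, rfl, hv, hmax⟩ :=
      exists_linkRoots_eq hg hu ((isValidSpan_parentGraph_iff hg hu).1 hp)
    refine ⟨⟨f, hf⟩, sigma_tree_span_ext rfl ?_⟩
    obtain ⟨hu', hv', hmax'⟩ := (hf.exists_ends hn).choose_spec
    exact Prod.ext ((hu _).1 ((hu' _).2 rfl)) (le_antisymm (hmax _ hv') (hmax' _ hv))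

/-- The total number of pairs (labeled tree on `n` vertices, valid span of it)
equals `(n+1)^(n-1)`. -/
theorem card_tree_validSpan_pairs (n : ℕ) (hn : 1 ≤ n) :
    Nat.card (Σ τ : {G : SimpleGraph (Fin n) // G.IsTree},
        {p : Fin n × Fin n // IsValidSpan τ.1 p.1 p.2})
      = (n + 1) ^ (n - 1) := by
  rw [← card_isForest n hn]
  exact (Nat.card_congr (Equiv.ofBijective _ (spanOfForest_bijective hn))).symm
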